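/- arXiv:2012.02338 — 2 statements merged into one kernel-verified Lean document; each statement's English description precedes it below -/
import Mathlib

section
/- Fix real numbers m > 0, r > 0, p > 0 with m · r > e · ln 2, let f(n) = (m · n · 2^{−n/r})^p on (0, ∞), and let n* = r / ln 2. Then the equation m · n = 2^{n/r} has exactly two solutions n₀, n₁ in (0, ∞), satisfying 0 < n₀ < n* < n₁; moreover f(n) > 1 for all n ∈ (n₀, n₁) and f(n) < 1 for all n ∈ (0, n₀) ∪ (n₁, ∞). -/
/-!
With `c = ln 2 / r`, `t = c n` and `k = m / c`, the equation `m n = 2^{n/r}` becomes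
`k t = exp t`, and the hypothesis `m r > e ln 2` becomes `k > e`, i.e. the line `k t` lies above
`exp` at `t = 1` (which corresponds to `n = n*`). The line lies below `exp` at `t = 0` and, since
`exp t ≥ 1 + t + t² / 2`, also at `t = 2 k`, so the intermediate value theorem gives a crossing on
each side of `1`. Strict convexity of `exp` then fixes the sign of `exp t - k t` away from the two
crossings (`exp_line_crossings`). Finally `(m n 2^{-n/r})^p` is greater or less than `1` according
to whether `m n` is greater or less than `2^{n/r}`.
-/

/-- A line `k t` with slope `k > e` meets the graph of `exp` at `t₀ < 1 < t₁`; it is above the graph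
between the two points and below it outside. -/
lemma exp_line_crossings (k : ℝ) (hk : Real.exp 1 < k) :
    ∃ t₀ t₁ : ℝ, 0 < t₀ ∧ t₀ < 1 ∧ 1 < t₁ ∧ Real.exp t₀ = k * t₀ ∧ Real.exp t₁ = k * t₁ ∧
      (∀ t, t₀ < t → t < t₁ → Real.exp t < k * t) ∧
      (∀ t, t < t₀ → k * t < Real.exp t) ∧
      (∀ t, t₁ < t → k * t < Real.exp t) := by
  have hk2 : 2 < k := by linarith [Real.add_one_le_exp 1]
  have hcont : Continuous fun t : ℝ => k * t - Real.exp t := by fun_prop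
  obtain ⟨t₀, ⟨h00, h01⟩, hz0⟩ :=
    intermediate_value_Ioo (zero_le_one' ℝ) hcont.continuousOn
      (show (0 : ℝ) ∈ Set.Ioo _ _ by constructor <;> norm_num [hk])
  obtain ⟨t₁, ⟨h11, -⟩, hz1⟩ :=
    intermediate_value_Ioo' (show (1 : ℝ) ≤ 2 * k by linarith) hcont.continuousOn
      (show (0 : ℝ) ∈ Set.Ioo _ _ by
        have := Real.quadratic_le_exp_of_nonneg (show (0 : ℝ) ≤ 2 * k by linarith)
        constructor
        · nlinarith
        · simpa using hk)
  have e0 : Real.exp t₀ = k * t₀ := by linarith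
  have e1 : Real.exp t₁ = k * t₁ := by linarith
  -- Slope inequality for three increasing points, with denominators cleared.
  have slope : ∀ x y z : ℝ, x < y → y < z →
      (Real.exp y - Real.exp x) * (z - y) < (Real.exp z - Real.exp y) * (y - x) := by
    intro x y z hxy hyz
    have h := strictConvexOn_exp.slope_strict_mono_adjacent (Set.mem_univ x) (Set.mem_univ z)
      hxy hyz
    rwa [div_lt_div_iff₀ (by linarith) (by linarith)] at h
  refine ⟨t₀, t₁, h00, h01, h11, e0, e1, fun t ha hb => ?_, fun t ha => ?_, fun t ha => ?_⟩
  · have h := slope _ _ _ ha hb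
    rw [e0, e1] at h
    have : 0 < (k * t - Real.exp t) * (t₁ - t₀) := by linarith
    linarith [pos_of_mul_pos_left this (by linarith)]
  · have h := slope t t₀ t₁ ha (by linarith)
    rw [e0, e1] at h
    have : 0 < (Real.exp t - k * t) * (t₁ - t₀) := by linarith
    linarith [pos_of_mul_pos_left this (by linarith)]
  · have h := slope t₀ t₁ t (by linarith) ha
    rw [e0, e1] at h
    have : 0 < (Real.exp t - k * t) * (t₁ - t₀) := by linarith
    linarith [pos_of_mul_pos_left this (by linarith)]

/-- If `m r > e ln 2`, the equation `m n = 2^{n/r}` has exactly two positive solutions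
`n₀ < n* < n₁` (with `n* = r / ln 2`), and the model function `f(n) = (m n 2^{-n/r})^p`
exceeds `1` exactly on `(n₀, n₁)` and is below `1` on `(0, n₀) ∪ (n₁, ∞)`. -/
theorem model_function_two_crossovers (m r p : ℝ) (hm : 0 < m) (hr : 0 < r) (hp : 0 < p)
    (hcrit : Real.exp 1 * Real.log 2 < m * r) :
    ∃ n₀ n₁ : ℝ, 0 < n₀ ∧ n₀ < r / Real.log 2 ∧ r / Real.log 2 < n₁ ∧
      (∀ n : ℝ, 0 < n → (m * n = (2 : ℝ) ^ (n / r) ↔ n = n₀ ∨ n = n₁)) ∧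
      (∀ n : ℝ, n₀ < n → n < n₁ → 1 < (m * n * (2 : ℝ) ^ (-n / r)) ^ p) ∧
      (∀ n : ℝ, 0 < n → n < n₀ → (m * n * (2 : ℝ) ^ (-n / r)) ^ p < 1) ∧
      (∀ n : ℝ, n₁ < n → (m * n * (2 : ℝ) ^ (-n / r)) ^ p < 1) := by
  have hl : 0 < Real.log 2 := Real.log_pos one_lt_two
  obtain ⟨c, hc⟩ : ∃ c, c = Real.log 2 / r := ⟨_, rfl⟩
  have hc0 : 0 < c := hc ▸ div_pos hl hr
  have hstar : r / Real.log 2 = 1 / c := by rw [hc, one_div_div]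
  have hk : Real.exp 1 < m / c := by
    rw [hc, div_div_eq_mul_div, lt_div_iff₀ hl]
    exact hcrit
  have hpow : ∀ n : ℝ, (2 : ℝ) ^ (n / r) = Real.exp (n * c) := by
    intro n
    rw [Real.rpow_def_of_pos two_pos, hc]
    ring_nf
  have hline : ∀ n : ℝ, m / c * (n * c) = m * n := by
    intro n
    field_simp
  have hval : ∀ n : ℝ, m * n * (2 : ℝ) ^ (-n / r) = m * n / Real.exp (n * c) := by
    intro n
    rw [hpow, neg_mul, Real.exp_neg, div_eq_mul_inv]
  obtain ⟨t₀, t₁, h00, h01, h11, e0, e1, hmid, hlo, hhi⟩ := exp_line_crossings (m / c) hk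
  have below : ∀ n : ℝ, 0 < n → m * n < Real.exp (n * c) →
      (m * n * (2 : ℝ) ^ (-n / r)) ^ p < 1 := by
    intro n hn h
    rw [hval]
    exact Real.rpow_lt_one (by positivity) ((div_lt_one (Real.exp_pos _)).2 h) hp
  have hlo' : ∀ n : ℝ, n < t₀ / c → m * n < Real.exp (n * c) := fun n h =>
    hline n ▸ hlo _ ((lt_div_iff₀ hc0).1 h)
  have hhi' : ∀ n : ℝ, t₁ / c < n → m * n < Real.exp (n * c) := fun n h =>
    hline n ▸ hhi _ ((div_lt_iff₀ hc0).1 h)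
  have hmid' : ∀ n : ℝ, t₀ / c < n → n < t₁ / c → Real.exp (n * c) < m * n := fun n h h' =>
    hline n ▸ hmid _ ((div_lt_iff₀ hc0).1 h) ((lt_div_iff₀ hc0).1 h')
  have hn1 : 0 < t₁ / c := div_pos (by linarith) hc0
  refine ⟨t₀ / c, t₁ / c, div_pos h00 hc0, ?_, ?_, fun n _ => ⟨fun h => ?_, ?_⟩,
    fun n ha hb => ?_, fun n hn ha => below n hn (hlo' n ha),
    fun n ha => below n (hn1.trans ha) (hhi' n ha)⟩
  · rw [hstar]
    gcongr
  · rw [hstar]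
    gcongr
  · rw [hpow] at h
    rcases lt_trichotomy n (t₀ / c) with h0 | h0 | h0
    · exact absurd h (hlo' n h0).ne
    · exact Or.inl h0
    rcases lt_trichotomy n (t₁ / c) with h1 | h1 | h1
    · exact absurd h (hmid' n h0 h1).ne'
    · exact Or.inr h1
    · exact absurd h (hhi' n h1).ne
  · rintro (rfl | rfl)
    · rw [hpow, ← hline, div_mul_cancel₀ _ hc0.ne', e0]
    · rw [hpow, ← hline, div_mul_cancel₀ _ hc0.ne', e1]
  · rw [hval]
    exact Real.one_lt_rpow ((one_lt_div (Real.exp_pos _)).2 (hmid' n ha hb)) hp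
end

section
/- Fix real numbers m > 0, r > 0, p > 0 with m · r = e · ln 2, let f(n) = (m · n · 2^{−n/r})^p on (0, ∞), and let n* = r / ln 2. Then n = n* is the unique solution in (0, ∞) of the equation m · n = 2^{n/r}, and f(n) ≤ 1 for all n > 0 with equality only at n = n*. -/
/-!
With `t = n ln 2 / r`, the relation `m r = e ln 2` gives `m n = e t` and `2^{n/r} = exp t`.
The inequality `t ≤ exp (t - 1)`, strict unless `t = 1`, therefore says `m n ≤ 2^{n/r}`, strict
unless `n = r / ln 2`. The claims about `f(n) = (m n / 2^{n/r})^p` follow since `p > 0`.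
-/

lemma crossover_eq (m r : ℝ) (hr : 0 < r) (hcrit : m * r = Real.exp 1 * Real.log 2) :
    m * (r / Real.log 2) = (2 : ℝ) ^ (r / Real.log 2 / r) := by
  have hl : 0 < Real.log 2 := Real.log_pos one_lt_two
  have h1 : Real.log 2 * (r / Real.log 2 / r) = 1 := by field_simp
  rw [Real.rpow_def_of_pos two_pos, h1, ← mul_div_assoc, hcrit, mul_div_cancel_right₀ _ hl.ne']

lemma crossover_lt (m r : ℝ) (hr : 0 < r) (hcrit : m * r = Real.exp 1 * Real.log 2)
    (n : ℝ) (hne : n ≠ r / Real.log 2) : m * n < (2 : ℝ) ^ (n / r) := by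
  have hl : 0 < Real.log 2 := Real.log_pos one_lt_two
  have ht : Real.log 2 * (n / r) - 1 ≠ 0 := by
    intro h
    apply hne
    field_simp at h ⊢
    linarith
  have hmn : m * n = Real.exp 1 * (Real.log 2 * (n / r)) := by
    rw [← mul_assoc, ← hcrit]
    field_simp
  have hlt := Real.add_one_lt_exp ht
  rw [sub_add_cancel, Real.exp_sub, lt_div_iff₀' (Real.exp_pos 1)] at hlt
  rwa [Real.rpow_def_of_pos two_pos, hmn]

/-- In the degenerate case `m r = e ln 2`, the point `n* = r / ln 2` is the unique positive
solution of `m n = 2^{n/r}`, and the model function `f(n) = (m n 2^{-n/r})^p` satisfies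
`f(n) ≤ 1` for all `n > 0`, with equality only at `n = n*`. -/
theorem model_function_degenerate_crossover (m r p : ℝ) (hm : 0 < m) (hr : 0 < r)
    (hp : 0 < p) (hcrit : m * r = Real.exp 1 * Real.log 2) :
    (∀ n : ℝ, 0 < n → (m * n = (2 : ℝ) ^ (n / r) ↔ n = r / Real.log 2)) ∧
    (∀ n : ℝ, 0 < n → (m * n * (2 : ℝ) ^ (-n / r)) ^ p ≤ 1) ∧
    (∀ n : ℝ, 0 < n → (m * n * (2 : ℝ) ^ (-n / r)) ^ p = 1 → n = r / Real.log 2) := by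
  have hlt := crossover_lt m r hr hcrit
  have heq := crossover_eq m r hr hcrit
  have hle : ∀ n : ℝ, m * n ≤ (2 : ℝ) ^ (n / r) := fun n => by
    by_cases h : n = r / Real.log 2
    · rw [h, heq]
    · exact (hlt n h).le
  have hdiv : ∀ n : ℝ, m * n * (2 : ℝ) ^ (-n / r) = m * n / (2 : ℝ) ^ (n / r) := fun n => by
    rw [neg_div, Real.rpow_neg two_pos.le, ← div_eq_mul_inv]
  have hpow : ∀ n : ℝ, 0 < (2 : ℝ) ^ (n / r) := fun n => Real.rpow_pos_of_pos two_pos _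
  refine ⟨fun n _ => ⟨fun h => ?_, fun h => h ▸ heq⟩, fun n hn => ?_, fun n hn h => ?_⟩
  · by_contra hne
    exact (hlt n hne).ne h
  · rw [hdiv]
    exact Real.rpow_le_one (div_nonneg (mul_pos hm hn).le (hpow n).le)
      ((div_le_one (hpow n)).2 (hle n)) hp.le
  · by_contra hne
    rw [hdiv] at h
    exact (Real.rpow_lt_one (div_nonneg (mul_pos hm hn).le (hpow n).le)
      ((div_lt_one (hpow n)).2 (hlt n hne)) hp).ne h
end
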